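/- Let a, b ∈ ℂ with ab ≠ 0 and let f be the binary constraint (0, a, b, 1). Then the binary constraint g defined by g(x_1,x_2) = f(x_1,x_2)·f(x_2,x_1)·u(x_1)·u(x_2), where u = [1, ab], equals a²b²·OR(x_1,x_2) with OR = [0,1,1]; consequently, OR is T-constructible from {f, u}. -/

import Mathlib

/-- A (complex-valued Boolean) constraint of arity `k`. -/
abbrev Constraint (k : ℕ) : Type := (Fin k → Bool) → ℂ

/-- The binary equality constraint `EQ = [1,0,1]`, as a two-argument function. -/
def EQc : Bool → Bool → ℂ := fun a b => if a = b then 1 else 0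

/-- The binary disequality constraint `XOR = [0,1,0]`, as a two-argument function. -/
def XORc : Bool → Bool → ℂ := fun a b => if a = b then 0 else 1

/-- The binary constraint `Implies = (1,1,0,1)`, as a two-argument function. -/
def IMPc : Bool → Bool → ℂ := fun a b => if a = true ∧ b = false then 0 else 1

/-- The unary constraint `[a, b]` (value `a` on input `0`, value `b` on input `1`). -/
def unC (a b : ℂ) : Constraint 1 := fun x => if x 0 then b else a

/-- The binary constraint `(a,b,c,d) = (f(0,0), f(0,1), f(1,0), f(1,1))`. -/
def binC (a b c d : ℂ) : Constraint 2 := fun x =>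
  if x 0 then (if x 1 then d else c) else (if x 1 then b else a)

/-- `OR = [0,1,1]`. -/
def ORc : Constraint 2 := binC 0 1 1 1

/-- `Implies = (1,1,0,1)` as a binary constraint. -/
def Impliesc : Constraint 2 := binC 1 1 0 1

/-- Membership in `NZ`: the constraint is everywhere nonzero. -/
def inNZ {k : ℕ} (f : Constraint k) : Prop := ∀ x, f x ≠ 0

/-- Membership in `DG`: the constraint is a product of unary constraints, one per variable. -/
def inDG {k : ℕ} (f : Constraint k) : Prop :=
  ∃ g : Fin k → Bool → ℂ, ∀ x, f x = ∏ i, g i (x i)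

/-- Membership in `ED`: the constraint is a product of at least one factor, each factor
being a unary constraint applied to some variable, or `EQ`/`XOR` applied to two variables. -/
def inED {k : ℕ} (f : Constraint k) : Prop :=
  ∃ (l1 l2 : ℕ) (h : Fin l1 → Bool → ℂ) (j : Fin l1 → Fin k)
    (g : Fin l2 → Bool → Bool → ℂ) (m n : Fin l2 → Fin k),
    1 ≤ l1 + l2 ∧ (∀ i, g i = EQc ∨ g i = XORc) ∧
    ∀ x, f x = (∏ i, h i (x (j i))) * ∏ i, g i (x (m i)) (x (n i))

/-- Membership in `IM`: `f ∉ NZ` and `f` is a product of at least one factor, each factor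
being a unary constraint applied to some variable, or `Implies` applied to two variables. -/
def inIM {k : ℕ} (f : Constraint k) : Prop :=
  ¬ inNZ f ∧
  ∃ (l1 l2 : ℕ) (h : Fin l1 → Bool → ℂ) (j : Fin l1 → Fin k)
    (m n : Fin l2 → Fin k),
    1 ≤ l1 + l2 ∧
    ∀ x, f x = (∏ i, h i (x (j i))) * ∏ i, IMPc (x (m i)) (x (n i))

/-- The underlying relation `R_f = {x : f x ≠ 0}` of a constraint `f`. -/
def relOf {k : ℕ} (f : Constraint k) : Set (Fin k → Bool) := {x | f x ≠ 0}

/-- Factors allowed in an IMP-style factorization of a relation: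
`Δ_c(x_i)` or `Implies(x_i, x_j)`. -/
inductive ImpFactor (k : ℕ) where
  | delta (c : Bool) (i : Fin k)
  | imp (i j : Fin k)
deriving DecidableEq

/-- Evaluation of an IMP-factor at an assignment. -/
def ImpFactor.eval {k : ℕ} : ImpFactor k → (Fin k → Bool) → Bool
  | .delta c i, x => x i == c
  | .imp i j, x => !(x i) || x j

/-- `L` is a factor list for the relation `R`: the conjunction of the factors in `L` equals `R`. -/
def isFactorListFor {k : ℕ} (L : List (ImpFactor k)) (R : Set (Fin k → Bool)) : Prop :=
  ∀ x, x ∈ R ↔ ∀ fac ∈ L, fac.eval x = true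

/-- Membership in `IMP`: the relation is the conjunction of a positive number of factors of the
forms `Δ_0(x)`, `Δ_1(x)`, `Implies(x,y)`. -/
def inIMP {k : ℕ} (R : Set (Fin k → Bool)) : Prop :=
  ∃ L : List (ImpFactor k), L ≠ [] ∧ isFactorListFor L R

/-- `f` has imp support when `R_f ∈ IMP`. -/
def hasImpSupport {k : ℕ} (f : Constraint k) : Prop := inIMP (relOf f)

/-- A factor list is imp-distinctive if no variable occurs both in a `Δ_c` factor and in an
`Implies` factor, and no factor `Implies(x,x)` occurs. -/
def impDistinctive {k : ℕ} (L : List (ImpFactor k)) : Prop :=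
  (∀ i : Fin k, ¬ ((∃ c, ImpFactor.delta c i ∈ L) ∧
      (∃ j, ImpFactor.imp i j ∈ L ∨ ImpFactor.imp j i ∈ L))) ∧
  (∀ i : Fin k, ImpFactor.imp i i ∉ L)

/-- Factors of the forms `Δ_c(x_i)` or `EQ(x_i,x_j)`. -/
inductive EqFactor (k : ℕ) where
  | delta (c : Bool) (i : Fin k)
  | eq (i j : Fin k)
deriving DecidableEq

/-- Evaluation of such a factor at an assignment. -/
def EqFactor.eval {k : ℕ} : EqFactor k → (Fin k → Bool) → Bool
  | .delta c i, x => x i == c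
  | .eq i j, x => x i == x j

/-- `f` is in simple form: its representing Boolean matrix (rows indexed by `R_f`) has
no all-`0` column, no all-`1` column, and no two identical columns. -/
def simpleForm {k : ℕ} (f : Constraint k) : Prop :=
  (∀ i : Fin k, ∃ a, f a ≠ 0 ∧ a i = true) ∧
  (∀ i : Fin k, ∃ a, f a ≠ 0 ∧ a i = false) ∧
  (∀ i j : Fin k, i ≠ j → ∃ a, f a ≠ 0 ∧ a i ≠ a j)

/-- A constraint of unspecified arity. -/
abbrev Ctr : Type := Σ k : ℕ, Constraint k

/-- T-constructibility of a constraint from a set `G` of constraints, by finitely many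
applications of permutation, pinning, projection, linking, expansion, multiplication,
and normalization. -/
inductive TCon (G : Set Ctr) : Ctr → Prop where
  | base {c : Ctr} : c ∈ G → TCon G c
  | perm {k : ℕ} {g : Constraint k} (σ : Equiv.Perm (Fin k)) :
      TCon G ⟨k, g⟩ → TCon G ⟨k, fun x => g (fun i => x (σ i))⟩
  | pinning {k : ℕ} {g : Constraint (k+1)} (i : Fin (k+1)) (c : Bool) :
      TCon G ⟨k+1, g⟩ → TCon G ⟨k, fun x => g (i.insertNth c x)⟩
  | proj {k : ℕ} {g : Constraint (k+1)} (i : Fin (k+1)) :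
      TCon G ⟨k+1, g⟩ →
      TCon G ⟨k, fun x => g (i.insertNth false x) + g (i.insertNth true x)⟩
  | link {k : ℕ} {g : Constraint (k+1)} (i : Fin (k+1)) (j : Fin k) :
      TCon G ⟨k+1, g⟩ → TCon G ⟨k, fun x => g (i.insertNth (x j) x)⟩
  | expand {k : ℕ} {g : Constraint k} (i : Fin (k+1)) :
      TCon G ⟨k, g⟩ → TCon G ⟨k+1, fun x => g (fun j => x (i.succAbove j))⟩
  | mul {k : ℕ} {g₁ g₂ : Constraint k} :
      TCon G ⟨k, g₁⟩ → TCon G ⟨k, g₂⟩ → TCon G ⟨k, fun x => g₁ x * g₂ x⟩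
  | norm {k : ℕ} {g : Constraint k} (lam : ℂ) (hlam : lam ≠ 0) :
      TCon G ⟨k, g⟩ → TCon G ⟨k, fun x => lam * g x⟩

/-- T-constructibility using no projection operation. -/
inductive TConNoProj (G : Set Ctr) : Ctr → Prop where
  | base {c : Ctr} : c ∈ G → TConNoProj G c
  | perm {k : ℕ} {g : Constraint k} (σ : Equiv.Perm (Fin k)) :
      TConNoProj G ⟨k, g⟩ → TConNoProj G ⟨k, fun x => g (fun i => x (σ i))⟩
  | pinning {k : ℕ} {g : Constraint (k+1)} (i : Fin (k+1)) (c : Bool) :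
      TConNoProj G ⟨k+1, g⟩ → TConNoProj G ⟨k, fun x => g (i.insertNth c x)⟩
  | link {k : ℕ} {g : Constraint (k+1)} (i : Fin (k+1)) (j : Fin k) :
      TConNoProj G ⟨k+1, g⟩ → TConNoProj G ⟨k, fun x => g (i.insertNth (x j) x)⟩
  | expand {k : ℕ} {g : Constraint k} (i : Fin (k+1)) :
      TConNoProj G ⟨k, g⟩ → TConNoProj G ⟨k+1, fun x => g (fun j => x (i.succAbove j))⟩
  | mul {k : ℕ} {g₁ g₂ : Constraint k} :
      TConNoProj G ⟨k, g₁⟩ → TConNoProj G ⟨k, g₂⟩ →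
      TConNoProj G ⟨k, fun x => g₁ x * g₂ x⟩
  | norm {k : ℕ} {g : Constraint k} (lam : ℂ) (hlam : lam ≠ 0) :
      TConNoProj G ⟨k, g⟩ → TConNoProj G ⟨k, fun x => lam * g x⟩

/-- Pinning the `i`-th variable of `f` to the bit `c`. -/
def pinC {k : ℕ} (f : Constraint (k+1)) (i : Fin (k+1)) (c : Bool) : Constraint k :=
  fun x => f (i.insertNth c x)

/-- `R_f` admits a good factor list: a factor list consisting only of `Implies` factors,
in which every variable is incident to at least one edge of the induced imp graph,
and whose imp graph has no (directed) cycle. -/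
def hasGoodFactorList {k : ℕ} (f : Constraint k) : Prop :=
  ∃ L : List (ImpFactor k),
    isFactorListFor L (relOf f) ∧
    (∀ fac ∈ L, ∃ i j, fac = ImpFactor.imp i j) ∧
    (∀ i : Fin k, ∃ j, ImpFactor.imp i j ∈ L ∨ ImpFactor.imp j i ∈ L) ∧
    ¬ ∃ i : Fin k, Relation.TransGen (fun a b => ImpFactor.imp a b ∈ L) i i

namespace TCon

variable {G : Set Ctr} {k : ℕ} {g : Constraint k}

theorem comp_injective (hg : TCon G ⟨k, g⟩) {n : ℕ} {e : Fin k → Fin n}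
    (he : Function.Injective e) : TCon G ⟨n, fun x => g (x ∘ e)⟩ := by
  induction n with
  | zero =>
    obtain rfl : k = 0 := Nat.le_zero.mp (Fin.le_of_injective e he)
    simpa only [Subsingleton.elim e id, Function.comp_id] using hg
  | succ m ih =>
    by_cases hsurj : Function.Surjective e
    · obtain rfl : k = m + 1 := Fin.equiv_iff_eq.mp ⟨Equiv.ofBijective e ⟨he, hsurj⟩⟩
      exact perm (Equiv.ofBijective e ⟨he, hsurj⟩) hg
    · obtain ⟨i, hi⟩ : ∃ i, ∀ j, e j ≠ i := by
        simpa only [Function.Surjective, not_forall, not_exists] using hsurj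
      choose e' he' using fun j => Fin.exists_succAbove_eq (hi j)
      obtain rfl : e = i.succAbove ∘ e' := funext fun j => (he' j).symm
      exact expand i (ih he.of_comp)

theorem comp (hg : TCon G ⟨k, g⟩) {n : ℕ} (e : Fin k → Fin n) :
    TCon G ⟨n, fun x => g (x ∘ e)⟩ := by
  induction k with
  | zero => exact hg.comp_injective (Function.injective_of_subsingleton e)
  | succ m ih =>
    by_cases he : Function.Injective e
    · exact hg.comp_injective he
    · obtain ⟨i, j, hij, hne⟩ : ∃ i j, e i = e j ∧ j ≠ i := by
        simpa only [Function.Injective, not_forall, exists_prop, ne_comm] using he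
      obtain ⟨j, rfl⟩ := Fin.exists_succAbove_eq hne
      convert ih (link i j hg) (e ∘ i.succAbove) using 4 with x
      exact (Fin.insertNth_eq_iff.mpr ⟨congrArg x hij.symm, rfl⟩).symm

theorem of_const_mul {c : ℂ} (hc : c ≠ 0) (h : TCon G ⟨k, fun x => c * g x⟩) :
    TCon G ⟨k, g⟩ := by
  simpa only [inv_mul_cancel_left₀ hc] using norm c⁻¹ (inv_ne_zero hc) h

theorem mul_swap_mul_unary {f : Constraint 2} {u : Constraint 1} (hf : TCon G ⟨2, f⟩)
    (hu : TCon G ⟨1, u⟩) :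
    TCon G ⟨2, fun x => f x * f ![x 1, x 0] * u ![x 0] * u ![x 1]⟩ := by
  have comp₁ (x : Fin 2 → Bool) (i : Fin 2) : x ∘ ![i] = ![x i] := (FinVec.map_eq x _).symm
  have comp₂ (x : Fin 2 → Bool) (i j : Fin 2) : x ∘ ![i, j] = ![x i, x j] :=
    (FinVec.map_eq x _).symm
  simpa only [comp₁, comp₂] using
    ((hf.mul (hf.comp ![1, 0])).mul (hu.comp ![0])).mul (hu.comp ![1])

end TCon

theorem binC_mul_swap_mul_unC (a b c d p q : ℂ) (x : Fin 2 → Bool) :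
    binC a b c d x * binC a b c d ![x 1, x 0] * unC p q ![x 0] * unC p q ![x 1] =
      binC (a ^ 2 * p ^ 2) (b * c * (p * q)) (b * c * (p * q)) (d ^ 2 * q ^ 2) x := by
  cases h₀ : x 0 <;> cases h₁ : x 1 <;>
    simp only [binC, unC, h₀, h₁, Matrix.cons_val_zero, Matrix.cons_val_one, if_true,
      Bool.false_eq_true, if_false] <;>
    ring

theorem const_mul_binC (r a b c d : ℂ) (x : Fin 2 → Bool) :
    r * binC a b c d x = binC (r * a) (r * b) (r * c) (r * d) x := by
  simp only [binC, mul_ite]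

/-- For `a, b ∈ ℂ` with `ab ≠ 0`, `f = (0,a,b,1)` and `u = [1,ab]`, the constraint
`g(x₁,x₂) = f(x₁,x₂)·f(x₂,x₁)·u(x₁)·u(x₂)` equals `a²b²·OR(x₁,x₂)`; consequently `OR` is
T-constructible from `{f, u}`. -/
theorem stmt8 (a b : ℂ) (hab : a * b ≠ 0) :
    (∀ x : Fin 2 → Bool,
      binC 0 a b 1 x * binC 0 a b 1 ![x 1, x 0] * unC 1 (a * b) ![x 0] * unC 1 (a * b) ![x 1]
        = a ^ 2 * b ^ 2 * ORc x) ∧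
    TCon ({⟨2, binC 0 a b 1⟩, ⟨1, unC 1 (a * b)⟩} : Set Ctr) ⟨2, ORc⟩ := by
  have hg : ∀ x : Fin 2 → Bool,
      binC 0 a b 1 x * binC 0 a b 1 ![x 1, x 0] * unC 1 (a * b) ![x 0] * unC 1 (a * b) ![x 1]
        = a ^ 2 * b ^ 2 * ORc x := by
    intro x
    rw [binC_mul_swap_mul_unC, ORc, const_mul_binC]
    ring_nf
  have hab₂ : a ^ 2 * b ^ 2 ≠ 0 := mul_pow a b 2 ▸ pow_ne_zero 2 hab
  refine ⟨hg, TCon.of_const_mul hab₂ ?_⟩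
  simp only [← hg]
  exact .mul_swap_mul_unary (.base (Set.mem_insert _ _)) (.base (Set.mem_insert_of_mem _ rfl))
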